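/- For all index sets I,J,M,N ⊆ {1,…,n} with |I| = |J| and |M| = |N|, the form r satisfies r([I|J],[M|N]) = r([N|M],[J|I]) = r([ω₀M|ω₀N],[ω₀I|ω₀J]), where ω₀ denotes the order-reversing permutation i ↦ n+1−i of {1,…,n} applied elementwise to index sets. -/

import Mathlib

/-!
A form satisfying conditions (ii) to (iv) of `IsRForm` is determined by its values on pairs of generators
(`IsBichar.ext`). The transposition `τ : X_{ij} ↦ X_{ji}` is an algebra automorphism of
`O_q(M_n(k))` reversing the comultiplication, and `ρ : X_{ij} ↦ X_{ω₀ i, ω₀ j}` is an algebra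
anti-automorphism preserving it. For `φ = τ` or `φ = ρ` the form `(a, b) ↦ r(φ b, φ a)` therefore
again satisfies (ii) to (iv), and it has the same values on generators as `r`, so it equals `r`.
The theorem follows from `τ [I|J] = [J|I]` and `ρ [I|J] = [ω₀ I|ω₀ J]`.

The second identity is a reindexing of the defining sum by `σ ↦ ω₀ σ ω₀`, which preserves the
number of inversions. The first says that the column-ordered and row-ordered expansions of a
quantum minor agree (`colDet_eq_rowDet`). This is proved by induction on the size, using only that
`X_{ij}` and `X_{lm}` commute for `i < l`, `j > m`: expand the column-ordered minor along its
first column and then its last row, the row-ordered one along its last row and then its first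
column; the two double sums coincide except for one term each, and these two terms agree because
the bottom-left entry commutes with the complementary minor. Nothing is divided by, so the
argument is valid at roots of unity.
-/

open scoped TensorProduct
open scoped Classical

noncomputable section

namespace QMat

variable (k : Type*) [Field k] (n : ℕ) (q : k)

/-- Defining relations of the quantized coordinate ring `O_q(M_n(k))`. -/
inductive Rel : FreeAlgebra k (Fin n × Fin n) → FreeAlgebra k (Fin n × Fin n) → Prop
  | col {i l j : Fin n} (h : i < l) :
      Rel (FreeAlgebra.ι k (i, j) * FreeAlgebra.ι k (l, j))
        (q • (FreeAlgebra.ι k (l, j) * FreeAlgebra.ι k (i, j)))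
  | row {i j m : Fin n} (h : j < m) :
      Rel (FreeAlgebra.ι k (i, j) * FreeAlgebra.ι k (i, m))
        (q • (FreeAlgebra.ι k (i, m) * FreeAlgebra.ι k (i, j)))
  | swap {i j l m : Fin n} (h1 : i < l) (h2 : m < j) :
      Rel (FreeAlgebra.ι k (i, j) * FreeAlgebra.ι k (l, m))
        (FreeAlgebra.ι k (l, m) * FreeAlgebra.ι k (i, j))
  | mixed {i j l m : Fin n} (h1 : i < l) (h2 : j < m) :
      Rel (FreeAlgebra.ι k (i, j) * FreeAlgebra.ι k (l, m))
        (FreeAlgebra.ι k (l, m) * FreeAlgebra.ι k (i, j)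
          + (q - q⁻¹) • (FreeAlgebra.ι k (i, m) * FreeAlgebra.ι k (l, j)))

/-- The quantized coordinate ring `A = O_q(M_n(k))`. -/
abbrev A : Type _ := RingQuot (Rel k n q)

/-- The generator `X_{ij}` of `O_q(M_n(k))`. -/
def X (i j : Fin n) : A k n q :=
  RingQuot.mkAlgHom k (Rel k n q) (FreeAlgebra.ι k (i, j))

/-- The number of inversions `ℓ(σ)` of a permutation of `Fin t`. -/
def inversions {t : ℕ} (σ : Equiv.Perm (Fin t)) : ℕ :=
  (Finset.univ.filter fun p : Fin t × Fin t => p.1 < p.2 ∧ σ p.2 < σ p.1).card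

/-- The quantum minor `[I|J]` (with junk value `0` when `|I| ≠ |J|`). -/
def qMinor (I J : Finset (Fin n)) : A k n q :=
  if h : I.card = J.card then
    ∑ σ : Equiv.Perm (Fin I.card),
      ((-q) ^ inversions σ) •
        (List.ofFn fun l : Fin I.card =>
          X k n q (↑((I.orderIsoOfFin rfl) (σ l))) (↑((J.orderIsoOfFin h.symm) l))).prod
  else 0

/-- `ℓ(S;T) = #{(s,t) ∈ S×T : s > t}`. -/
def ell (S T : Finset (Fin n)) : ℕ :=
  ((S ×ˢ T).filter fun p => p.2 < p.1).card

/-- The `(-q)`-integer `[d]_{-q} = (-q)^{d-1} + (-q)^{d-3} + ⋯ + (-q)^{-(d-1)}`. -/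
def negqInt (d : ℕ) : k :=
  ∑ s ∈ Finset.range d, (-q) ^ ((d : ℤ) - 1 - 2 * (s : ℤ))

/-- `ξ_q(I;J) = [d₁]_{-q}⋯[d_m]_{-q}` where `d_l = |[1,r_l] ∩ J| - l + 1` for
`I = {r₁ < ⋯ < r_m}` (with junk value `1` when `|I| ≠ |J|`). -/
def xiq (I J : Finset (Fin n)) : k :=
  if _h : I.card = J.card then
    ∏ l : Fin I.card,
      negqInt k q
        ((J.filter fun x => x ≤ (↑((I.orderIsoOfFin rfl) l) : Fin n)).card - (l : ℕ))
  else 1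

/-- The componentwise order `I ≤ J` on index sets of the same cardinality:
writing `I = {i₁ < ⋯ < i_t}` and `J = {j₁ < ⋯ < j_t}`, we require `i_l ≤ j_l` for all `l`. -/
def setLE (I J : Finset (Fin n)) : Prop :=
  I.card = J.card ∧
    ∀ (h : I.card = J.card) (l : Fin I.card),
      (↑((I.orderIsoOfFin rfl) l) : Fin n) ≤ (↑((J.orderIsoOfFin h.symm) l) : Fin n)

/-- `S^♮ = (X ∩ Y) ⊔ ((X ∪ Y) ∖ S)` relative to the pair `(X, Y)`. -/
def snat (X Y S : Finset (Fin n)) : Finset (Fin n) :=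
  (X ∩ Y) ∪ ((X ∪ Y) \ S)

/-- `S_≤(X,Y) = {S ⊆ X ∪ Y : X ∩ Y ⊆ S, |S| = |X|, S ≤ X}`. -/
def sLE (X Y : Finset (Fin n)) : Finset (Finset (Fin n)) :=
  (X ∪ Y).powerset.filter fun S => X ∩ Y ⊆ S ∧ S.card = X.card ∧ setLE n S X

/-- `S_<(X,Y) = {S ⊆ X ∪ Y : X ∩ Y ⊆ S, |S| = |X|, S < X}`. -/
def sLT (X Y : Finset (Fin n)) : Finset (Finset (Fin n)) :=
  (sLE n X Y).filter fun S => S ≠ X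

/-- `S_≥(X,Y) = {T ⊆ X ∪ Y : X ∩ Y ⊆ T, |T| = |X|, T ≥ X}`. -/
def sGE (X Y : Finset (Fin n)) : Finset (Finset (Fin n)) :=
  (X ∪ Y).powerset.filter fun T => X ∩ Y ⊆ T ∧ T.card = X.card ∧ setLE n X T

/-- `S_>(X,Y) = {T ⊆ X ∪ Y : X ∩ Y ⊆ T, |T| = |X|, T > X}`. -/
def sGT (X Y : Finset (Fin n)) : Finset (Finset (Fin n)) :=
  (sGE n X Y).filter fun T => T ≠ X

/-- `L(S,X,Y) = ℓ((S∖S^♮)∪(Y∖X); X∖S) − ℓ((S∖S^♮)∪(Y∖X); S∖X)`. -/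
def Lfun (S X Y : Finset (Fin n)) : ℤ :=
  (ell n ((S \ snat n X Y S) ∪ (Y \ X)) (X \ S) : ℤ)
    - (ell n ((S \ snat n X Y S) ∪ (Y \ X)) (S \ X) : ℤ)

/-- `L^♮(T,X,Y) = ℓ((T^♮∖T)∪(X∖Y); T∖X) − ℓ((T^♮∖T)∪(X∖Y); X∖T)`. -/
def Lnat (T X Y : Finset (Fin n)) : ℤ :=
  (ell n ((snat n X Y T \ T) ∪ (X \ Y)) (T \ X) : ℤ)
    - (ell n ((snat n X Y T \ T) ∪ (X \ Y)) (X \ T) : ℤ)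

/-- The form `A ⊗ A → k` given on pure tensors by `x ⊗ y ↦ f(x) g(y)`. -/
def biform (f g : A k n q →ₗ[k] k) : (A k n q ⊗[k] A k n q) →ₗ[k] k :=
  (TensorProduct.lid k k).toLinearMap ∘ₗ TensorProduct.map f g

/-- Opposite multiplication `A ⊗ A → A`, `x ⊗ y ↦ y * x`. -/
def mulRev : (A k n q ⊗[k] A k n q) →ₗ[k] A k n q :=
  (LinearMap.mul' k (A k n q)) ∘ₗ (TensorProduct.comm k (A k n q) (A k n q)).toLinearMap

/-- `Σ (a₁ ⊗ b₁) ⊗ (a₂ ⊗ b₂)`, the regrouped double Sweedler decomposition of `a` and `b`. -/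
def sweedler2 (Δ : A k n q →ₐ[k] A k n q ⊗[k] A k n q) (a b : A k n q) :
    (A k n q ⊗[k] A k n q) ⊗[k] (A k n q ⊗[k] A k n q) :=
  (TensorProduct.tensorTensorTensorComm k (A k n q) (A k n q) (A k n q) (A k n q))
    (Δ a ⊗ₜ[k] Δ b)

/-- `Δ` is the standard comultiplication: `Δ(X_{ij}) = Σ_l X_{il} ⊗ X_{lj}`. -/
def IsComul (Δ : A k n q →ₐ[k] A k n q ⊗[k] A k n q) : Prop :=
  ∀ i j : Fin n, Δ (X k n q i j) = ∑ l : Fin n, X k n q i l ⊗ₜ[k] X k n q l j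

/-- `ε` is the standard counit: `ε(X_{ij}) = δ_{ij}`. -/
def IsCounit (ε : A k n q →ₐ[k] k) : Prop :=
  ∀ i j : Fin n, ε (X k n q i j) = if i = j then 1 else 0

/-- The bilinear form `r` satisfies the coquasitriangularity conditions (1.7)(i)-(iv)
together with the prescribed values (1.9) on the generators. -/
def IsRForm (Δ : A k n q →ₐ[k] A k n q ⊗[k] A k n q) (ε : A k n q →ₐ[k] k)
    (r : A k n q →ₗ[k] A k n q →ₗ[k] k) : Prop :=
  -- (i) `Σ r(a₁,b₁) a₂ b₂ = Σ r(a₂,b₂) b₁ a₁`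
  (∀ a b : A k n q,
      (TensorProduct.lid k (A k n q))
          ((TensorProduct.map (TensorProduct.lift r) (LinearMap.mul' k (A k n q)))
            (sweedler2 k n q Δ a b)) =
        (TensorProduct.rid k (A k n q))
          ((TensorProduct.map (mulRev k n q) (TensorProduct.lift r))
            (sweedler2 k n q Δ a b))) ∧
  -- (ii) `r(ab, c) = Σ r(a,c₁) r(b,c₂)`
  (∀ a b c : A k n q, r (a * b) c = biform k n q (r a) (r b) (Δ c)) ∧
  -- (iii) `r(a, bc) = Σ r(a₁,c) r(a₂,b)`
  (∀ a b c : A k n q, r a (b * c) = biform k n q (r.flip c) (r.flip b) (Δ a)) ∧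
  -- (iv) `r(a,1) = r(1,a) = ε(a)`
  (∀ a : A k n q, r a 1 = ε a ∧ r 1 a = ε a) ∧
  -- values on generators
  (∀ i j l m : Fin n,
      r (X k n q i j) (X k n q l m) =
        if i = j ∧ l = m ∧ i = l then q
        else if i = j ∧ l = m then 1
        else if l = j ∧ m = i ∧ j < i then q - q⁻¹
        else 0)

/-- `Σ f(a₁,b₁) g(a₂,b₂)`, the convolution-type pairing of two bilinear forms. -/
def convPair (Δ : A k n q →ₐ[k] A k n q ⊗[k] A k n q)
    (f g : A k n q →ₗ[k] A k n q →ₗ[k] k) (a b : A k n q) : k :=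
  (TensorProduct.lid k k)
    ((TensorProduct.map (TensorProduct.lift f) (TensorProduct.lift g))
      (sweedler2 k n q Δ a b))

end QMat

open QMat

namespace QMat

/-! ### Column-ordered and row-ordered quantum determinants -/

section Determinants

variable {k : Type*} [Field k] {R : Type*} [Ring R] [Algebra k R]

/-- The permutation of `Fin (t + 1)` sending `0` to `p` and acting on the remaining points as `τ`
followed by the increasing bijection onto the complement of `p`. -/
def permZero {t : ℕ} (p : Fin (t + 1)) (τ : Equiv.Perm (Fin t)) : Equiv.Perm (Fin (t + 1)) :=
  p.cycleRange.symm * Equiv.Perm.decomposeFin.symm (0, τ)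

lemma permZero_zero {t : ℕ} (p : Fin (t + 1)) (τ : Equiv.Perm (Fin t)) :
    permZero p τ 0 = p := by
  simp [permZero]

lemma permZero_succ {t : ℕ} (p : Fin (t + 1)) (τ : Equiv.Perm (Fin t)) (j : Fin t) :
    permZero p τ j.succ = p.succAbove (τ j) := by
  simp [permZero]

/-- The permutation of `Fin (t + 1)` sending the last point to `p` and acting on the remaining
points as `τ` followed by the increasing bijection onto the complement of `p`. -/
def permLast {t : ℕ} (p : Fin (t + 1)) (τ : Equiv.Perm (Fin t)) : Equiv.Perm (Fin (t + 1)) :=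
  permZero p τ * finRotate (t + 1)

lemma permLast_last {t : ℕ} (p : Fin (t + 1)) (τ : Equiv.Perm (Fin t)) :
    permLast p τ (Fin.last t) = p := by
  simp [permLast, permZero_zero]

lemma permLast_castSucc {t : ℕ} (p : Fin (t + 1)) (τ : Equiv.Perm (Fin t)) (j : Fin t) :
    permLast p τ j.castSucc = p.succAbove (τ j) := by
  have : finRotate (t + 1) j.castSucc = j.succ := by
    ext
    rw [coe_finRotate_of_ne_last (Fin.castSucc_lt_last j).ne]
    simp
  simp [permLast, this, permZero_succ]

lemma permZero_bijective (t : ℕ) :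
    Function.Bijective (fun x : Fin (t + 1) × Equiv.Perm (Fin t) => permZero x.1 x.2) := by
  rw [Fintype.bijective_iff_injective_and_card]
  refine ⟨?_, by simp [Fintype.card_perm, Nat.factorial_succ]⟩
  rintro ⟨p, τ⟩ ⟨p', τ'⟩ h
  have hp : p = p' := by
    have := congrArg (fun σ => σ 0) h
    simpa [permZero_zero] using this
  subst hp
  have hτ : τ = τ' := by
    ext1 j
    have := congrArg (fun σ => σ j.succ) h
    simpa [permZero_succ] using this
  rw [hτ]

lemma permLast_bijective (t : ℕ) :
    Function.Bijective (fun x : Fin (t + 1) × Equiv.Perm (Fin t) => permLast x.1 x.2) :=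
  (Group.mulRight_bijective (finRotate (t + 1))).comp (permZero_bijective t)

lemma inversions_eq_sum {t : ℕ} (σ : Equiv.Perm (Fin t)) :
    inversions σ = ∑ i, ∑ j, if i < j ∧ σ j < σ i then 1 else 0 := by
  rw [inversions, Finset.card_filter, Fintype.sum_prod_type]

lemma inversions_permZero {t : ℕ} (p : Fin (t + 1)) (τ : Equiv.Perm (Fin t)) :
    inversions (permZero p τ) = p + inversions τ := by
  have hp : (∑ j, if p.succAbove (τ j) < p then 1 else 0) = (p : ℕ) := by
    rw [Equiv.sum_comp τ (fun j => if p.succAbove j < p then 1 else 0)]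
    simp only [Fin.succAbove_lt_iff_castSucc_lt]
    have h : (∑ i : Fin (t + 1), if i < p then 1 else 0) = (p : ℕ) := by
      rw [← Finset.card_filter, ← Fin.card_Iio p]
      congr 1
      ext
      simp
    rw [Fin.sum_univ_castSucc, if_neg (Fin.le_last p).not_gt, add_zero] at h
    exact h
  simp only [inversions_eq_sum, Fin.sum_univ_succ, permZero_zero, permZero_succ]
  simp [hp]

lemma inversions_permLast {t : ℕ} (p : Fin (t + 1)) (τ : Equiv.Perm (Fin t)) :
    inversions (permLast p τ) = inversions τ + (t - p) := by
  have hp : (∑ j, if p < p.succAbove (τ j) then 1 else 0) = t - (p : ℕ) := by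
    rw [Equiv.sum_comp τ (fun j => if p < p.succAbove j then 1 else 0)]
    simp only [Fin.lt_succAbove_iff_lt_castSucc]
    have h : (∑ i : Fin (t + 1), if p < i then 1 else 0) = t - (p : ℕ) := by
      rw [← Finset.card_filter, show t - (p : ℕ) = t + 1 - 1 - p by simp, ← Fin.card_Ioi p]
      congr 1
      ext
      simp
    rw [Fin.sum_univ_succ, if_neg (Fin.zero_le p).not_gt, zero_add] at h
    exact h
  simp only [inversions_eq_sum, Fin.sum_univ_castSucc, permLast_last, permLast_castSucc,
    Finset.sum_add_distrib]
  have h (x : Fin t) : ¬ Fin.last t < x.castSucc := (Fin.le_last _).not_gt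
  simp [hp, Fin.castSucc_lt_last, h]

/-- The column-ordered quantum determinant `Σ_σ (-q)^{ℓ(σ)} Y_{σ(1),1} ⋯ Y_{σ(t),t}` of a square
array with entries in a noncommutative algebra. -/
def colDet (q : k) {t : ℕ} (Y : Fin t → Fin t → R) : R :=
  ∑ σ : Equiv.Perm (Fin t), ((-q) ^ inversions σ) • (List.ofFn fun l => Y (σ l) l).prod

/-- The row-ordered quantum determinant `Σ_σ (-q)^{ℓ(σ)} Y_{1,σ(1)} ⋯ Y_{t,σ(t)}`. -/
def rowDet (q : k) {t : ℕ} (Y : Fin t → Fin t → R) : R :=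
  ∑ σ : Equiv.Perm (Fin t), ((-q) ^ inversions σ) • (List.ofFn fun l => Y l (σ l)).prod

/-- Laplace expansion of the column-ordered determinant along its first column. -/
lemma colDet_succ (q : k) {t : ℕ} (Y : Fin (t + 1) → Fin (t + 1) → R) :
    colDet q Y = ∑ p : Fin (t + 1), ((-q) ^ (p : ℕ)) •
      (Y p 0 * colDet q fun i j => Y (p.succAbove i) j.succ) := by
  rw [colDet, ← (permZero_bijective t).sum_comp, Fintype.sum_prod_type]
  refine Finset.sum_congr rfl fun p _ => ?_
  rw [colDet, Finset.mul_sum, Finset.smul_sum]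
  refine Finset.sum_congr rfl fun τ _ => ?_
  simp [List.ofFn_succ, permZero_zero, permZero_succ, inversions_permZero, pow_add, smul_smul]

/-- Laplace expansion of the row-ordered determinant along its last row. -/
lemma rowDet_succ (q : k) {t : ℕ} (Y : Fin (t + 1) → Fin (t + 1) → R) :
    rowDet q Y = ∑ p : Fin (t + 1), ((-q) ^ (t - p : ℕ)) •
      ((rowDet q fun i j => Y i.castSucc (p.succAbove j)) * Y (Fin.last t) p) := by
  rw [rowDet, ← (permLast_bijective t).sum_comp, Fintype.sum_prod_type]
  refine Finset.sum_congr rfl fun p _ => ?_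
  rw [rowDet, Finset.sum_mul, Finset.smul_sum]
  refine Finset.sum_congr rfl fun τ _ => ?_
  rw [List.ofFn_succ']
  simp only [permLast_last, permLast_castSucc, inversions_permLast]
  simp [pow_add, smul_smul, mul_comm]

lemma commute_colDet (q : k) {t : ℕ} (Y : Fin t → Fin t → R) (x : R)
    (h : ∀ i j, Commute x (Y i j)) : Commute x (colDet q Y) := by
  refine Commute.sum_right _ _ _ fun σ _ => Commute.smul_right (Commute.list_prod_right _ _ ?_) _
  intro y hy
  obtain ⟨l, rfl⟩ := (List.mem_ofFn' _ _).1 hy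
  exact h _ _

/-- The column-ordered and row-ordered quantum determinants agree as soon as entries in
south-west to north-east position commute. Expanding the first by its first column and then its
last row, and the second by its last row and then its first column, gives the same double sum up
to a commutator of the bottom-left entry with the complementary minor. -/
theorem colDet_eq_rowDet (q : k) (t : ℕ) (Y : Fin t → Fin t → R)
    (hY : ∀ i l j m, i < l → m < j → Commute (Y i j) (Y l m)) : colDet q Y = rowDet q Y := by
  induction t using Nat.strong_induction_on with
  | _ t ih =>
  match t with
  | 0 => simp [colDet, rowDet]
  | 1 =>
    have (σ : Equiv.Perm (Fin 1)) : σ = 1 := Subsingleton.elim _ _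
    simp [colDet, rowDet]
  | t + 2 =>
    have e1 (p : Fin (t + 2)) : (colDet q fun i j => Y (p.succAbove i) j.succ) =
        rowDet q fun i j => Y (p.succAbove i) j.succ :=
      ih (t + 1) (by omega) _ fun i l j m h1 h2 =>
        hY _ _ _ _ (p.strictMono_succAbove h1) (Fin.succ_lt_succ_iff.2 h2)
    have e2 (p : Fin (t + 2)) : (rowDet q fun i j => Y i.castSucc (p.succAbove j)) =
        colDet q fun i j => Y i.castSucc (p.succAbove j) :=
      (ih (t + 1) (by omega) _ fun i l j m h1 h2 =>
        hY _ _ _ _ (Fin.castSucc_lt_castSucc_iff.2 h1) (p.strictMono_succAbove h2)).symm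
    have e3 (p m : Fin (t + 1)) :
        (rowDet q fun i j => Y (p.succAbove i).castSucc (m.succAbove j).succ) =
        colDet q fun i j => Y (p.succAbove i).castSucc (m.succAbove j).succ :=
      (ih t (by omega) _ fun i l j m' h1 h2 =>
        hY _ _ _ _ (Fin.castSucc_lt_castSucc_iff.2 (p.strictMono_succAbove h1))
          (Fin.succ_lt_succ_iff.2 (m.strictMono_succAbove h2))).symm
    have hc : Commute (Y (Fin.last (t + 1)) 0)
        (colDet q fun i j : Fin (t + 1) => Y i.castSucc j.succ) :=
      commute_colDet q _ _ fun i j =>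
        (hY _ _ _ _ (Fin.castSucc_lt_last i) (Fin.succ_pos j)).symm
    -- The terms for the bottom-left entry are split off on both sides and matched first.
    rw [colDet_succ, rowDet_succ, Fin.sum_univ_castSucc, add_comm]
    conv_rhs => rw [Fin.sum_univ_succ]
    congr 1
    · rw [e1, ← e1, e2]
      simp only [Fin.succAbove_last, Fin.zero_succAbove, Fin.val_last, Fin.val_zero, tsub_zero]
      rw [hc.eq]
    · simp only [e1, e2]
      conv_lhs => enter [2, p]; rw [rowDet_succ]
      conv_rhs => enter [2, m]; rw [colDet_succ]
      simp only [Finset.mul_sum, Finset.sum_mul, Finset.smul_sum]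
      rw [Finset.sum_comm]
      refine Finset.sum_congr rfl fun m _ => Finset.sum_congr rfl fun p _ => ?_
      have hl : p.castSucc.succAbove (Fin.last t) = Fin.last (t + 1) := by
        simp [Fin.succAbove_castSucc_of_le _ _ (Fin.le_last p)]
      simp only [hl, Fin.castSucc_succAbove_castSucc, Fin.succ_succAbove_succ,
        Fin.succ_succAbove_zero, e3]
      simp [smul_smul, mul_assoc, mul_comm]

end Determinants

/-! ### Bicharacters and the symmetries of the quantum matrix bialgebra -/

section Algebra

variable {k : Type*} [Field k] {n : ℕ} {q : k}

lemma X_col {i l : Fin n} (j : Fin n) (h : i < l) :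
    X k n q i j * X k n q l j = q • (X k n q l j * X k n q i j) := by
  simpa [X] using RingQuot.mkAlgHom_rel k (Rel.col (q := q) (j := j) h)

lemma X_row (i : Fin n) {j m : Fin n} (h : j < m) :
    X k n q i j * X k n q i m = q • (X k n q i m * X k n q i j) := by
  simpa [X] using RingQuot.mkAlgHom_rel k (Rel.row (q := q) (i := i) h)

lemma X_swap {i l j m : Fin n} (h1 : i < l) (h2 : m < j) :
    X k n q i j * X k n q l m = X k n q l m * X k n q i j := by
  simpa [X] using RingQuot.mkAlgHom_rel k (Rel.swap (q := q) h1 h2)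

lemma X_mixed {i l j m : Fin n} (h1 : i < l) (h2 : j < m) :
    X k n q i j * X k n q l m =
      X k n q l m * X k n q i j + (q - q⁻¹) • (X k n q i m * X k n q l j) := by
  simpa [X] using RingQuot.mkAlgHom_rel k (Rel.mixed (q := q) h1 h2)

lemma A_induction {P : A k n q → Prop} (hc : ∀ c, P (algebraMap k (A k n q) c))
    (hX : ∀ i j, P (X k n q i j)) (hadd : ∀ a b, P a → P b → P (a + b))
    (hmul : ∀ a b, P a → P b → P (a * b)) (a : A k n q) : P a := by
  obtain ⟨x, rfl⟩ := RingQuot.mkAlgHom_surjective k (Rel k n q) a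
  induction x using FreeAlgebra.induction with
  | grade0 c => simpa using hc c
  | grade1 p => exact hX p.1 p.2
  | mul a b ha hb => simpa using hmul _ _ ha hb
  | add a b ha hb => simpa using hadd _ _ ha hb

/-- The transposition automorphism `X_{ij} ↦ X_{ji}` of `O_q(M_n(k))`. -/
def transposeHom (k : Type*) [Field k] (n : ℕ) (q : k) : A k n q →ₐ[k] A k n q :=
  RingQuot.liftAlgHom k ⟨FreeAlgebra.lift k fun p => X k n q p.2 p.1, by
    intro x y h
    induction h with
    | col h => simpa using X_row _ h
    | row h => simpa using X_col _ h
    | swap h1 h2 => simpa using (X_swap h2 h1).symm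
    | mixed h1 h2 => simpa [← X_swap h2 h1] using X_mixed h2 h1⟩

lemma transposeHom_X (i j : Fin n) : transposeHom k n q (X k n q i j) = X k n q j i := by
  simp [transposeHom, X]

/-- The anti-automorphism `X_{ij} ↦ X_{ω₀ i, ω₀ j}` of `O_q(M_n(k))`, as an algebra map to the
opposite algebra. -/
def revHom (k : Type*) [Field k] (n : ℕ) (q : k) : A k n q →ₐ[k] (A k n q)ᵐᵒᵖ :=
  RingQuot.liftAlgHom k ⟨FreeAlgebra.lift k fun p => MulOpposite.op (X k n q p.1.rev p.2.rev), by
    intro x y h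
    induction h with
    | col h =>
      simpa [← MulOpposite.op_mul, ← MulOpposite.op_smul] using X_col _ (Fin.rev_lt_rev.2 h)
    | row h =>
      simpa [← MulOpposite.op_mul, ← MulOpposite.op_smul] using X_row _ (Fin.rev_lt_rev.2 h)
    | swap h1 h2 =>
      simpa [← MulOpposite.op_mul] using X_swap (Fin.rev_lt_rev.2 h1) (Fin.rev_lt_rev.2 h2)
    | mixed h1 h2 =>
      simpa [← MulOpposite.op_mul, ← MulOpposite.op_smul, ← MulOpposite.op_add] using
        X_mixed (Fin.rev_lt_rev.2 h1) (Fin.rev_lt_rev.2 h2)⟩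

/-- The anti-automorphism `X_{ij} ↦ X_{ω₀ i, ω₀ j}` as a linear endomorphism. -/
def revMap (k : Type*) [Field k] (n : ℕ) (q : k) : A k n q →ₗ[k] A k n q :=
  (MulOpposite.opLinearEquiv k).symm.toLinearMap ∘ₗ (revHom k n q).toLinearMap

lemma revMap_X (i j : Fin n) : revMap k n q (X k n q i j) = X k n q i.rev j.rev := by
  simp [revMap, revHom, X]

lemma revMap_mul (a b : A k n q) :
    revMap k n q (a * b) = revMap k n q b * revMap k n q a := by
  simp [revMap]

lemma revMap_algebraMap (c : k) :
    revMap k n q (algebraMap k _ c) = algebraMap k _ c := by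
  simp [revMap]

lemma revMap_one : revMap k n q 1 = 1 := by
  simp [revMap]

/-- A bicharacter: a bilinear form that is multiplicative in both arguments in the sense of
(ii) to (iv) of a coquasitriangular structure. -/
structure IsBichar (Δ : A k n q →ₐ[k] A k n q ⊗[k] A k n q) (ε : A k n q →ₐ[k] k)
    (r : A k n q →ₗ[k] A k n q →ₗ[k] k) : Prop where
  mul_left : ∀ a b c, r (a * b) c = biform k n q (r a) (r b) (Δ c)
  mul_right : ∀ a b c, r a (b * c) = biform k n q (r.flip c) (r.flip b) (Δ a)
  one_right : ∀ a, r a 1 = ε a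
  one_left : ∀ a, r 1 a = ε a

/-- A bicharacter is determined by its values on pairs of generators. -/
lemma IsBichar.ext {Δ : A k n q →ₐ[k] A k n q ⊗[k] A k n q} (hΔ : IsComul k n q Δ)
    {ε : A k n q →ₐ[k] k} {r s : A k n q →ₗ[k] A k n q →ₗ[k] k}
    (hr : IsBichar Δ ε r) (hs : IsBichar Δ ε s)
    (h : ∀ i j l m, r (X k n q i j) (X k n q l m) = s (X k n q i j) (X k n q l m)) : r = s := by
  have hX (b : A k n q) : ∀ i j, r (X k n q i j) b = s (X k n q i j) b := by
    induction b using A_induction with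
    | hc c => intro i j; simp [Algebra.algebraMap_eq_smul_one, hr.one_right, hs.one_right]
    | hX l m => intro i j; exact h i j l m
    | hadd a b ha hb => intro i j; simp [ha, hb]
    | hmul a b ha hb =>
      intro i j
      rw [hr.mul_right, hs.mul_right, hΔ i j]
      simp [biform, ha, hb]
  refine LinearMap.ext₂ fun a => ?_
  induction a using A_induction with
  | hc c => intro b; simp [Algebra.algebraMap_eq_smul_one, hr.one_left, hs.one_left]
  | hX i j => intro b; exact hX b i j
  | hadd a b ha hb => simp [ha, hb]
  | hmul a b ha hb =>
    intro c
    rw [hr.mul_left, hs.mul_left, LinearMap.ext ha, LinearMap.ext hb]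

/-- The form `(a, b) ↦ r(φ b, φ a)`. -/
def twist (r : A k n q →ₗ[k] A k n q →ₗ[k] k) (φ : A k n q →ₗ[k] A k n q) :
    A k n q →ₗ[k] A k n q →ₗ[k] k :=
  (r.compl₁₂ φ φ).flip

lemma twist_apply (r : A k n q →ₗ[k] A k n q →ₗ[k] k) (φ : A k n q →ₗ[k] A k n q)
    (a b : A k n q) : twist r φ a b = r (φ b) (φ a) := rfl

lemma biform_map (f g : A k n q →ₗ[k] k) (φ : A k n q →ₗ[k] A k n q)
    (x : A k n q ⊗[k] A k n q) :
    biform k n q f g (TensorProduct.map φ φ x) = biform k n q (f ∘ₗ φ) (g ∘ₗ φ) x := by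
  induction x using TensorProduct.induction_on with
  | zero => simp
  | tmul a b => simp [biform]
  | add x y hx hy => simp only [map_add, hx, hy]

lemma biform_comm (f g : A k n q →ₗ[k] k) (x : A k n q ⊗[k] A k n q) :
    biform k n q f g (TensorProduct.comm k _ _ x) = biform k n q g f x := by
  induction x using TensorProduct.induction_on with
  | zero => simp
  | tmul a b => simp [biform, mul_comm]
  | add x y hx hy => simp only [map_add, hx, hy]

/-- A bicharacter twisted by an algebra automorphism that reverses the comultiplication is a
bicharacter. -/
lemma IsBichar.twist_of_mul {Δ : A k n q →ₐ[k] A k n q ⊗[k] A k n q}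
    {ε : A k n q →ₐ[k] k} {r : A k n q →ₗ[k] A k n q →ₗ[k] k} (hr : IsBichar Δ ε r)
    {φ : A k n q →ₗ[k] A k n q} (h1 : φ 1 = 1) (hmul : ∀ a b, φ (a * b) = φ a * φ b)
    (hε : ∀ a, ε (φ a) = ε a)
    (hφ : ∀ a, Δ (φ a) = TensorProduct.comm k _ _ (TensorProduct.map φ φ (Δ a))) :
    IsBichar Δ ε (twist r φ) where
  mul_left a b c := by
    rw [twist_apply, hmul, hr.mul_right, hφ, biform_comm, biform_map]
    rfl
  mul_right a b c := by
    rw [twist_apply, hmul, hr.mul_left, hφ, biform_comm, biform_map]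
    rfl
  one_right a := by rw [twist_apply, h1, hr.one_left, hε]
  one_left a := by rw [twist_apply, h1, hr.one_right, hε]

/-- A bicharacter twisted by an algebra anti-automorphism that preserves the comultiplication is a
bicharacter. -/
lemma IsBichar.twist_of_antimul {Δ : A k n q →ₐ[k] A k n q ⊗[k] A k n q}
    {ε : A k n q →ₐ[k] k} {r : A k n q →ₗ[k] A k n q →ₗ[k] k} (hr : IsBichar Δ ε r)
    {φ : A k n q →ₗ[k] A k n q} (h1 : φ 1 = 1) (hmul : ∀ a b, φ (a * b) = φ b * φ a)
    (hε : ∀ a, ε (φ a) = ε a) (hφ : ∀ a, Δ (φ a) = TensorProduct.map φ φ (Δ a)) :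
    IsBichar Δ ε (twist r φ) where
  mul_left a b c := by
    rw [twist_apply, hmul, hr.mul_right, hφ, biform_map]
    rfl
  mul_right a b c := by
    rw [twist_apply, hmul, hr.mul_left, hφ, biform_map]
    rfl
  one_right a := by rw [twist_apply, h1, hr.one_left, hε]
  one_left a := by rw [twist_apply, h1, hr.one_right, hε]

lemma counit_transposeHom {ε : A k n q →ₐ[k] k} (hε : IsCounit k n q ε) (a : A k n q) :
    ε (transposeHom k n q a) = ε a := by
  induction a using A_induction with
  | hc c => simp
  | hX i j => rw [transposeHom_X, hε, hε]; simp [eq_comm]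
  | hadd a b ha hb => simp [ha, hb]
  | hmul a b ha hb => simp [ha, hb]

lemma counit_revMap {ε : A k n q →ₐ[k] k} (hε : IsCounit k n q ε) (a : A k n q) :
    ε (revMap k n q a) = ε a := by
  induction a using A_induction with
  | hc c => simp [revMap_algebraMap]
  | hX i j => rw [revMap_X, hε, hε]; simp
  | hadd a b ha hb => simp [ha, hb]
  | hmul a b ha hb => simp [revMap_mul, ha, hb, mul_comm]

lemma comul_transposeHom {Δ : A k n q →ₐ[k] A k n q ⊗[k] A k n q} (hΔ : IsComul k n q Δ)
    (a : A k n q) : Δ (transposeHom k n q a) =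
      TensorProduct.comm k _ _ (TensorProduct.map (transposeHom k n q).toLinearMap
        (transposeHom k n q).toLinearMap (Δ a)) := by
  let ψ : A k n q ⊗[k] A k n q →ₐ[k] A k n q ⊗[k] A k n q :=
    (Algebra.TensorProduct.comm k (A k n q) (A k n q)).toAlgHom.comp
      (Algebra.TensorProduct.map (transposeHom k n q) (transposeHom k n q))
  change _ = ψ (Δ a)
  induction a using A_induction with
  | hc c => simp only [AlgHom.commutes]
  | hX i j => simp [transposeHom_X, hΔ i j, hΔ j i, ψ]
  | hadd a b ha hb => simp [ha, hb]
  | hmul a b ha hb => simp [ha, hb]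

lemma map_revMap_mul (x y : A k n q ⊗[k] A k n q) :
    TensorProduct.map (revMap k n q) (revMap k n q) (x * y) =
      TensorProduct.map (revMap k n q) (revMap k n q) y *
        TensorProduct.map (revMap k n q) (revMap k n q) x := by
  induction x using TensorProduct.induction_on with
  | zero => simp
  | add x x' hx hx' => simp only [add_mul, mul_add, map_add, hx, hx']
  | tmul a b =>
    induction y using TensorProduct.induction_on with
    | zero => simp
    | add x x' hx hx' => simp only [add_mul, mul_add, map_add, hx, hx']
    | tmul c d => simp [revMap_mul]

lemma comul_revMap {Δ : A k n q →ₐ[k] A k n q ⊗[k] A k n q} (hΔ : IsComul k n q Δ)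
    (a : A k n q) : Δ (revMap k n q a) =
      TensorProduct.map (revMap k n q) (revMap k n q) (Δ a) := by
  induction a using A_induction with
  | hc c =>
    simp [Algebra.algebraMap_eq_smul_one, Algebra.TensorProduct.one_def, revMap_one]
  | hX i j =>
    rw [revMap_X, hΔ, hΔ, map_sum]
    rw [← Equiv.sum_comp Fin.revPerm]
    simp [revMap_X]
  | hadd a b ha hb => simp [ha, hb]
  | hmul a b ha hb => simp [revMap_mul, ha, hb, map_revMap_mul]

lemma IsRForm.isBichar {Δ : A k n q →ₐ[k] A k n q ⊗[k] A k n q} {ε : A k n q →ₐ[k] k}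
    {r : A k n q →ₗ[k] A k n q →ₗ[k] k} (hr : IsRForm k n q Δ ε r) : IsBichar Δ ε r :=
  ⟨hr.2.1, hr.2.2.1, fun a => (hr.2.2.2.1 a).1, fun a => (hr.2.2.2.1 a).2⟩

/-- `r(a, b) = r(τ b, τ a)` for the transposition `τ`. -/
lemma IsRForm.transpose {Δ : A k n q →ₐ[k] A k n q ⊗[k] A k n q} {ε : A k n q →ₐ[k] k}
    (hΔ : IsComul k n q Δ) (hε : IsCounit k n q ε)
    {r : A k n q →ₗ[k] A k n q →ₗ[k] k} (hr : IsRForm k n q Δ ε r) (a b : A k n q) :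
    r a b = r (transposeHom k n q b) (transposeHom k n q a) := by
  have h : r = twist r (transposeHom k n q).toLinearMap := by
    refine hr.isBichar.ext hΔ (hr.isBichar.twist_of_mul (by simp) (by simp)
      (counit_transposeHom hε) (comul_transposeHom hΔ)) fun i j l m => ?_
    simp only [twist_apply, AlgHom.toLinearMap_apply, transposeHom_X, hr.2.2.2.2]
    grind
  exact LinearMap.congr_fun₂ h a b

/-- `r(a, b) = r(ρ b, ρ a)` for the anti-automorphism `ρ : X_{ij} ↦ X_{ω₀ i, ω₀ j}`. -/
lemma IsRForm.rev {Δ : A k n q →ₐ[k] A k n q ⊗[k] A k n q} {ε : A k n q →ₐ[k] k}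
    (hΔ : IsComul k n q Δ) (hε : IsCounit k n q ε)
    {r : A k n q →ₗ[k] A k n q →ₗ[k] k} (hr : IsRForm k n q Δ ε r) (a b : A k n q) :
    r a b = r (revMap k n q b) (revMap k n q a) := by
  have h : r = twist r (revMap k n q) := by
    refine hr.isBichar.ext hΔ (hr.isBichar.twist_of_antimul revMap_one revMap_mul
      (counit_revMap hε) (comul_revMap hΔ)) fun i j l m => ?_
    simp only [twist_apply, revMap_X, hr.2.2.2.2, Fin.rev_inj, Fin.rev_lt_rev]
    grind
  exact LinearMap.congr_fun₂ h a b

end Algebra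

/-! ### Action of the symmetries on quantum minors -/

section Minors

variable {k : Type*} [Field k] {n : ℕ} {q : k}

lemma qMinor_eq_colDet {t : ℕ} {I J : Finset (Fin n)} (hI : I.card = t) (hJ : J.card = t) :
    qMinor k n q I J =
      colDet q fun i j => X k n q (I.orderEmbOfFin hI i) (J.orderEmbOfFin hJ j) := by
  subst hI
  rw [qMinor, dif_pos hJ.symm]
  rfl

/-- Transposition exchanges the row and column sets of a quantum minor. -/
lemma transposeHom_qMinor {I J : Finset (Fin n)} (h : I.card = J.card) :
    transposeHom k n q (qMinor k n q I J) = qMinor k n q J I := by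
  rw [qMinor_eq_colDet h rfl, qMinor_eq_colDet rfl h, colDet_eq_rowDet]
  · simp only [rowDet, colDet, map_sum, map_smul, map_list_prod, List.map_ofFn,
      Function.comp_def, transposeHom_X]
  · intro i l j m h1 h2
    exact X_swap (by simpa using h1) (by simpa using h2)

lemma inversions_rev {t : ℕ} (σ : Equiv.Perm (Fin t)) :
    inversions (Fin.revPerm * σ * Fin.revPerm) = inversions σ := by
  rw [inversions_eq_sum, inversions_eq_sum, Finset.sum_comm, ← Equiv.sum_comp Fin.revPerm]
  refine Finset.sum_congr rfl fun i _ => ?_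
  rw [← Equiv.sum_comp Fin.revPerm]
  simp

lemma revMap_list_prod (L : List (A k n q)) :
    revMap k n q L.prod = ((L.map (revMap k n q)).reverse).prod := by
  induction L with
  | nil => simp [revMap_one]
  | cons a L ih => simp [revMap_mul, ih]

lemma reverse_ofFn {α : Type*} {t : ℕ} (f : Fin t → α) :
    (List.ofFn f).reverse = List.ofFn fun i => f i.rev := by
  refine List.ext_getElem (by simp) fun i h1 h2 => ?_
  simp only [List.getElem_reverse, List.getElem_ofFn, List.length_ofFn]
  congr 1
  ext
  simp [Fin.val_rev]
  omega

lemma orderEmbOfFin_image_rev {t : ℕ} {I : Finset (Fin n)} (hI : I.card = t)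
    (hI' : (I.image Fin.rev).card = t) (i : Fin t) :
    (I.image Fin.rev).orderEmbOfFin hI' i = (I.orderEmbOfFin hI i.rev).rev := by
  have := Finset.orderEmbOfFin_unique hI' (f := fun i => (I.orderEmbOfFin hI i.rev).rev)
    (fun x => Finset.mem_image_of_mem _ (Finset.orderEmbOfFin_mem _ _ _))
    (fun a b h => by simpa using h)
  exact (congrFun this i).symm

/-- The anti-automorphism `X_{ij} ↦ X_{ω₀ i, ω₀ j}` sends `[I|J]` to `[ω₀ I|ω₀ J]`. -/
lemma revMap_qMinor {I J : Finset (Fin n)} (h : I.card = J.card) :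
    revMap k n q (qMinor k n q I J) =
      qMinor k n q (I.image Fin.rev) (J.image Fin.rev) := by
  have hI : (I.image Fin.rev).card = I.card := Finset.card_image_of_injective _ Fin.rev_injective
  have hJ : (J.image Fin.rev).card = I.card :=
    (Finset.card_image_of_injective _ Fin.rev_injective).trans h.symm
  rw [qMinor_eq_colDet rfl h.symm, qMinor_eq_colDet hI hJ]
  simp only [orderEmbOfFin_image_rev rfl hI, orderEmbOfFin_image_rev h.symm hJ]
  rw [colDet, colDet, map_sum,
    ← (((Group.mulLeft_bijective Fin.revPerm).comp
      (Group.mulRight_bijective Fin.revPerm))).sum_comp (g := fun σ : Equiv.Perm (Fin I.card) => _)]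
  refine Finset.sum_congr rfl fun σ _ => ?_
  simp only [Function.comp_def, ← mul_assoc, inversions_rev, map_smul, revMap_list_prod,
    List.map_ofFn, reverse_ofFn, revMap_X]
  simp

end Minors

end QMat

/-- `r([I|J],[M|N]) = r([N|M],[J|I]) = r([ω₀M|ω₀N],[ω₀I|ω₀J])`. -/
theorem stmt1 (k : Type*) [Field k] (n : ℕ) (hn : 0 < n) (q : k) (hq : q ≠ 0)
    (Δ : A k n q →ₐ[k] A k n q ⊗[k] A k n q) (ε : A k n q →ₐ[k] k)
    (hΔ : IsComul k n q Δ) (hε : IsCounit k n q ε)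
    (r : A k n q →ₗ[k] A k n q →ₗ[k] k) (hr : IsRForm k n q Δ ε r)
    (I J M N : Finset (Fin n)) (hIJ : I.card = J.card) (hMN : M.card = N.card) :
    r (qMinor k n q I J) (qMinor k n q M N) = r (qMinor k n q N M) (qMinor k n q J I) ∧
    r (qMinor k n q I J) (qMinor k n q M N) =
      r (qMinor k n q (M.image Fin.rev) (N.image Fin.rev))
        (qMinor k n q (I.image Fin.rev) (J.image Fin.rev)) := by
  refine ⟨?_, ?_⟩
  · rw [hr.transpose hΔ hε, transposeHom_qMinor hIJ, transposeHom_qMinor hMN]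
  · rw [hr.rev hΔ hε, revMap_qMinor hIJ, revMap_qMinor hMN]

end
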